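/- Let f = Σ_{i=1}^{m} c_i X^{α_i} be a polynomial in ℂ[x_1,…,x_n] with distinct exponent vectors α_1,…,α_m, let p_1,…,p_{m−1} ∈ ℂ^n be zeros of f, and let G be the determinant of the m×m matrix over ℂ[x_1,…,x_n] whose first row consists of the monomials X^{α_1},…,X^{α_m} and whose (i+1)-th row (for i = 1,…,m−1) consists of the constants P_i^{α_1},…,P_i^{α_m}. For 1 ≤ k ≤ m, let X_k^* denote the determinant of the (m−1)×(m−1) matrix of complex numbers obtained by deleting row 1 and column k (i.e. with entries P_i^{α_j} for i = 1,…,m−1 and j ≠ k). If c_k ≠ 0 and X_k^* ≠ 0 for some k, then G = ((−1)^{k+1} / c_k) · X_k^* · f in ℂ[x_1,…,x_n]. -/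

import Mathlib

open MvPolynomial

/-!
The interpolation matrix sends the coefficient vector `c` to
`(f, f(p₁), …, f(pₘ₋₁)) = (f, 0, …, 0)`. Multiplying by the adjugate gives
`G · c = f · (first column of the adjugate)`, and the `k`-th entry of that column is the signed
minor `(-1)^{k+1} X_k^*`.
-/

theorem det_mul_apply_eq_adjugate_mul_of_mulVec_eq_single {ι S : Type*} [Fintype ι] [DecidableEq ι]
    [CommRing S] {M : Matrix ι ι S} {v : ι → S} {i : ι} {y : S} (hMv : M.mulVec v = Pi.single i y)
    (k : ι) : M.det * v k = M.adjugate k i * y := by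
  calc M.det * v k = (M.adjugate.mulVec (M.mulVec v)) k := by
        simp [Matrix.mulVec_mulVec, Matrix.adjugate_mul, Matrix.smul_mulVec]
    _ = M.adjugate k i * y := by simp [hMv]

section InterpolationMatrix

variable {R A : Type*} [CommRing R] [CommRing A] [Algebra R A] {m : ℕ}

/-- The matrix whose determinant is the interpolation determinant: row `0` consists of the elements
`b j` (the monomials, in the polynomial case), and row `i + 1` of the constants `φ i (b j)`.
Evaluation at the `i`-th point is encoded as an arbitrary linear functional `φ i`. -/
def interpolationMatrix (b : Fin (m + 1) → A) (φ : Fin m → A →ₗ[R] R) :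
    Matrix (Fin (m + 1)) (Fin (m + 1)) A :=
  Matrix.of (Fin.cons b fun i j => algebraMap R A (φ i (b j)))

namespace interpolationMatrix

variable (b : Fin (m + 1) → A) (φ : Fin m → A →ₗ[R] R)

theorem mulVec_algebraMap (c : Fin (m + 1) → R) :
    (interpolationMatrix b φ).mulVec (fun j => algebraMap R A (c j)) =
      Fin.cons (∑ j, c j • b j) fun i => algebraMap R A (φ i (∑ j, c j • b j)) := by
  funext i
  cases i using Fin.cases with
  | zero => simp [interpolationMatrix, Matrix.mulVec, dotProduct, Algebra.smul_def, mul_comm]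
  | succ i => simp [interpolationMatrix, Matrix.mulVec, dotProduct, mul_comm]

theorem adjugate_apply_zero (k : Fin (m + 1)) :
    (interpolationMatrix b φ).adjugate k 0 =
      algebraMap R A ((-1) ^ (k : ℕ) * (Matrix.of fun i j => φ i (b (k.succAbove j))).det) := by
  have minor_eq_map : (interpolationMatrix b φ).submatrix Fin.succ k.succAbove =
      (Matrix.of fun i j => φ i (b (k.succAbove j))).map (algebraMap R A) := by
    ext i j
    simp [interpolationMatrix]
  simp [Matrix.adjugate_fin_succ_eq_det_submatrix, minor_eq_map, RingHom.map_det]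

theorem smul_det {c : Fin (m + 1) → R} (hφ : ∀ i, φ i (∑ j, c j • b j) = 0) (k : Fin (m + 1)) :
    c k • (interpolationMatrix b φ).det =
      ((-1) ^ (k : ℕ) * (Matrix.of fun i j => φ i (b (k.succAbove j))).det) •
        ∑ j, c j • b j := by
  have mulVec_eq_single : (interpolationMatrix b φ).mulVec (fun j => algebraMap R A (c j)) =
      Pi.single 0 (∑ j, c j • b j) := by
    rw [mulVec_algebraMap]
    funext i
    cases i using Fin.cases <;> simp [hφ]
  rw [Algebra.smul_def, mul_comm,
    det_mul_apply_eq_adjugate_mul_of_mulVec_eq_single mulVec_eq_single k, adjugate_apply_zero,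
    ← Algebra.smul_def]

end interpolationMatrix

end InterpolationMatrix

theorem interpolation_determinant_eq_minor_mul_f_general {K A : Type*} [Field K] [CommRing A]
    [Algebra K A] {m : ℕ} (b : Fin (m + 1) → A) (φ : Fin m → A →ₗ[K] K) {c : Fin (m + 1) → K}
    (hφ : ∀ i, φ i (∑ j, c j • b j) = 0) {k : Fin (m + 1)} (hck : c k ≠ 0) :
    (interpolationMatrix b φ).det =
      ((-1) ^ ((k : ℕ) + 1 + 1) / c k * (Matrix.of fun i j => φ i (b (k.succAbove j))).det) •
        ∑ j, c j • b j := by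
  have sign_div : ∀ x : K, (-1) ^ ((k : ℕ) + 1 + 1) / c k * x = (c k)⁻¹ * ((-1) ^ (k : ℕ) * x) :=
    fun x => by ring
  rw [sign_div, mul_smul, eq_inv_smul_iff₀ hck, interpolationMatrix.smul_det b φ hφ]

/-- With the interpolation determinant `G` as above, if for some column
`k` (written here zero-based, so that the paper's 1-based column index is `k+1`) the
coefficient `c_k` is nonzero and the `(1,k)`-minor `X_k^*` is nonzero, then
`G = ((-1)^{k+1} / c_k) · X_k^* · f` (with the paper's 1-based sign `(-1)^{(k+1)+1}`). -/
theorem interpolation_determinant_eq_minor_mul_f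
    (n m : ℕ)
    (α : Fin (m + 1) → (Fin n →₀ ℕ)) (hα : Function.Injective α)
    (c : Fin (m + 1) → ℂ)
    (f : MvPolynomial (Fin n) ℂ)
    (hf : f = ∑ i : Fin (m + 1), monomial (α i) (c i))
    (p : Fin m → (Fin n → ℂ))
    (hp : ∀ i : Fin m, eval (p i) f = 0)
    (G : MvPolynomial (Fin n) ℂ)
    (hG : G = Matrix.det (Matrix.of (Fin.cases
      (fun j : Fin (m + 1) => monomial (α j) (1 : ℂ))
      (fun (i : Fin m) (j : Fin (m + 1)) =>
        C (eval (p i) (monomial (α j) (1 : ℂ)))))))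
    (k : Fin (m + 1))
    (Xk : ℂ)
    (hXk : Xk = Matrix.det (Matrix.of (fun (i : Fin m) (j : Fin m) =>
      eval (p i) (monomial (α (k.succAbove j)) (1 : ℂ)))))
    (hck : c k ≠ 0) (hXk0 : Xk ≠ 0) :
    G = C ((-1 : ℂ) ^ (((k : ℕ) + 1) + 1) / c k * Xk) * f := by
  have hf_smul : f = ∑ j, c j • monomial (α j) (1 : ℂ) := by simp [hf, smul_monomial]
  rw [hG, hXk, ← smul_eq_C_mul, hf_smul]
  exact interpolation_determinant_eq_minor_mul_f_general (fun j => monomial (α j) (1 : ℂ))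
    (fun i => (aeval (p i)).toLinearMap) (fun i => hf_smul ▸ hp i) hck
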